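/- For all n ≥ 2, the dimension of the S_{3n−2}-module S^{3^{n−1}1} ⊕ S^{3^{n−2}21²} equals (4 / ((n+1)(n+2)(n+3))) · (3n)! / (n!)³. -/

import Mathlib

open Finset Equiv

noncomputable section
attribute [local instance] Classical.propDecidable

/-- The group algebra `ℂ[S_N]`.  All representations are over `ℂ`; a left ideal of the
group algebra is an `S_N`-representation via left multiplication. -/
abbrev GA (N : ℕ) := MonoidAlgebra ℂ (Equiv.Perm (Fin N))

/-- A permutation as an element of the group algebra. -/
def ofP {N : ℕ} (σ : Equiv.Perm (Fin N)) : GA N :=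
  MonoidAlgebra.of ℂ (Equiv.Perm (Fin N)) σ

/-- The sign of a permutation, as a complex scalar. -/
def sgnC {n : ℕ} (σ : Equiv.Perm (Fin n)) : ℂ := ((Equiv.Perm.sign σ : ℤ) : ℂ)

/-- The subgroup (as a finset) of permutations preserving the fibers of `h`
(e.g. the row or the column stabilizer of a tableau). -/
def stab {N : ℕ} (h : Fin N → ℕ) : Finset (Equiv.Perm (Fin N)) :=
  Finset.univ.filter (fun σ => ∀ x, h (σ x) = h x)

/-- The Young symmetrizer of a tableau given by its row and column functions. -/
def youngSym {N : ℕ} (row col : Fin N → ℕ) : GA N :=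
  (∑ σ ∈ stab col, sgnC σ • ofP σ) * (∑ σ ∈ stab row, ofP σ)

/-- `f` is a partition of `N`: a weakly decreasing sequence of row lengths, supported on
the first `N` values, with total sum `N`. -/
def IsPartitionN (f : ℕ → ℕ) (N : ℕ) : Prop :=
  Antitone f ∧ (∀ i, N ≤ i → f i = 0) ∧ ∑ i ∈ Finset.range N, f i = N

/-- `(row, col)` is a Young tableau of shape `f` on the letters `Fin N`: the letters
occupy exactly the cells of the Young diagram of `f`, each cell once. -/
def IsTableau {N : ℕ} (f : ℕ → ℕ) (row col : Fin N → ℕ) : Prop :=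
  Function.Injective (fun x => (row x, col x)) ∧
  ∀ r c : ℕ, (∃ x, row x = r ∧ col x = c) ↔ c < f r

/-- The Specht module `S^f`, realized as the left ideal of `ℂ[S_N]` generated by the
Young symmetrizer of a tableau of shape `f`. -/
def SpechtIdeal {N : ℕ} (row col : Fin N → ℕ) : Ideal (GA N) :=
  Ideal.span {youngSym row col}

/-- The length of the last column of the partition `f` (with at most `N` parts):
the number of parts equal to the largest part. -/
def lastColLen (f : ℕ → ℕ) (N : ℕ) : ℕ :=
  ((Finset.range N).filter (fun i => f i = f 0)).card

/-- The number of (positive) parts of `f`, i.e. the length of its first column. -/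
def numParts (f : ℕ → ℕ) (N : ℕ) : ℕ :=
  ((Finset.range N).filter (fun i => 0 < f i)).card

/-- The partition `3^{n−1} 1` of `3n − 2`. -/
def shapeA (n : ℕ) : ℕ → ℕ :=
  fun j => if j < n - 1 then 3 else if j = n - 1 then 1 else 0

/-- The partition `3^{n−2} 2 1²` of `3n − 2`. -/
def shapeB (n : ℕ) : ℕ → ℕ :=
  fun j => if j < n - 2 then 3 else if j = n - 2 then 2 else if j < n + 1 then 1 else 0

/-!
Let `μ` be the column lengths of the diagram and `m` the number of columns. Recording the column of
each letter sends the Specht module, up to a twist by the sign, to the span of polytabloids inside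
the words of weight `μ` on `m` letters. This span consists of highest weight vectors for `𝔤𝔩ₘ`.
Slice a word by its first letter: slices of highest weight vectors are highest weight vectors for
`μ` with one cell removed, and polytabloids of tableaux with one removable cell less occur as slices
of polytabloids. By induction both spaces are squeezed to the number of standard tableaux. The
latter satisfies the branching recursion, which Frobenius' formula solves because
`∑ xⱼ Δ(x + eⱼ) = (∑ xⱼ + m(m-1)/2) Δ(x)` for the Vandermonde determinant `Δ`: with the rising
factorials `xⱼ⁽ᵏ⁾` as entries, the `j`-th summand multiplies the entry at `(j, k)` by `xⱼ + k`.
Working with columns instead of rows keeps `m = 3` while the number of rows grows.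
-/

section Determinants

open Matrix Polynomial

lemma sum_det_updateRow_add_mul {ι R : Type*} [Fintype ι] [DecidableEq ι] [CommRing R]
    (M : Matrix ι ι R) (r c : ι → R) :
    ∑ a, (M.updateRow a fun k => (r a + c k) * M a k).det = (∑ i, r i + ∑ i, c i) * M.det := by
  have prod_eq (a : ι) (σ : Perm ι) :
      ∏ i, (M.updateRow a fun k => (r a + c k) * M a k) (σ i) i =
        (r a + c (σ⁻¹ a)) * ∏ i, M (σ i) i := by
    rw [← Finset.mul_prod_erase univ _ (mem_univ (σ⁻¹ a)),
      ← Finset.mul_prod_erase univ (fun i => M (σ i) i) (mem_univ (σ⁻¹ a)), ← mul_assoc]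
    congr 1
    · simp
    · refine prod_congr rfl fun i hi => ?_
      rw [updateRow_ne fun h => ne_of_mem_erase hi (by simp [← h])]
  simp only [det_apply', prod_eq, mul_sum]
  rw [sum_comm]
  refine sum_congr rfl fun σ _ => ?_
  rw [← Equiv.sum_comp σ⁻¹ c, ← sum_add_distrib, sum_mul]
  exact sum_congr rfl fun a _ => by ring

lemma sum_mul_det_vandermonde_add_single {R : Type*} [CommRing R] [IsDomain R] {m : ℕ}
    (x : Fin m → R) :
    ∑ j, x j * (vandermonde (x + Pi.single j 1)).det =
      (∑ j, x j + ∑ j : Fin m, ((j : ℕ) : R)) * (vandermonde x).det := by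
  have det_eq (y : Fin m → R) : (vandermonde y).det =
      (of fun i j : Fin m => (ascPochhammer R j).eval (y i)).det :=
    det_eval_matrixOfPolynomials_eq_det_vandermonde y _
      (fun i => ascPochhammer_natDegree R i) (fun i => monic_ascPochhammer R i)
  rw [det_eq x, ← sum_det_updateRow_add_mul]
  refine sum_congr rfl fun a _ => ?_
  -- `x (x + 1)⁽ᵏ⁾ = x⁽ᵏ⁺¹⁾ = (x + k) x⁽ᵏ⁾` for rising factorials
  have eval_shift (k : ℕ) : x a * (ascPochhammer R k).eval (x a + 1) =
      (x a + k) * (ascPochhammer R k).eval (x a) := by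
    rw [mul_comm (x a + k), ← ascPochhammer_succ_eval, ascPochhammer_succ_left]
    simp [eval_comp]
  have shift_eq :
      (of fun i j : Fin m => (ascPochhammer R j).eval ((x + Pi.single a 1 : Fin m → R) i)) =
        (of fun i j : Fin m => (ascPochhammer R j).eval (x i)).updateRow a
          fun k => (ascPochhammer R k).eval (x a + 1) := by
    ext i k
    rcases eq_or_ne i a with rfl | h
    · simp
    · simp [h]
  rw [det_eq, shift_eq, ← det_updateRow_smul]
  congr 2
  exact funext fun k => eval_shift k

end Determinants

section StandardTableaux

open Nat

/-- The last cell of column `j` of the diagram with columns of length `μ` is a removable corner. -/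
def IsRemovable {m : ℕ} (μ : Fin m → ℕ) (j : Fin m) : Prop :=
  0 < μ j ∧ Antitone (μ - Pi.single j 1)

/-- The number of standard Young tableaux with `N` cells and columns of length `μ`, defined through
the branching rule. The value is meaningful only if `μ` is antitone with sum `N`. -/
def numStandard {m : ℕ} : ℕ → (Fin m → ℕ) → ℕ
  | 0, _ => 1
  | N + 1, μ => ∑ j, if IsRemovable μ j then numStandard N (μ - Pi.single j 1) else 0

/-- The beta numbers `μ j + (m - 1 - j)` of a partition `μ` with at most `m` parts, the variables of
Frobenius' dimension formula. -/
def betaNumber {m : ℕ} (μ : Fin m → ℕ) (j : Fin m) : ℕ := μ j + j.rev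

variable {m : ℕ} {μ : Fin m → ℕ} {j : Fin m}

lemma sub_single_add_single (h : 0 < μ j) : μ - Pi.single j 1 + Pi.single j 1 = μ :=
  tsub_add_cancel_of_le fun i => by
    rcases eq_or_ne i j with rfl | hij
    · simpa using Nat.succ_le_of_lt h
    · simp [hij]

lemma sum_sub_single_add_one (h : 0 < μ j) :
    ∑ i, (μ - Pi.single j 1 : Fin m → ℕ) i + 1 = ∑ i, μ i := by
  conv_rhs => rw [← sub_single_add_single h]
  simp only [Pi.add_apply, sum_add_distrib, sum_pi_single', mem_univ, if_true]

lemma betaNumber_add_single (μ : Fin m → ℕ) (j : Fin m) :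
    betaNumber (μ + Pi.single j 1) = betaNumber μ + Pi.single j 1 := by
  ext i
  simp only [betaNumber, Pi.add_apply]
  ring

lemma prod_factorial_add_single (l : Fin m → ℕ) (j : Fin m) :
    ∏ i, ((l + Pi.single j 1 : Fin m → ℕ) i)! = (l j + 1) * ∏ i, (l i)! := by
  rw [← mul_prod_erase univ _ (mem_univ j), ← mul_prod_erase univ (fun i => (l i)!) (mem_univ j),
    ← mul_assoc]
  congr 1
  · simp [Nat.factorial_succ]
  · exact prod_congr rfl fun i hi => by simp [ne_of_mem_erase hi]

lemma betaNumber_eq_of_not_isRemovable (hμ : Antitone μ) (h : ¬ IsRemovable μ j) :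
    betaNumber μ j = 0 ∨ ∃ i ≠ j, betaNumber μ j = betaNumber μ i + 1 := by
  have exists_le : 0 < μ j → ∃ i > j, μ j ≤ μ i := by
    intro hj
    simp only [IsRemovable, hj, true_and, Antitone, not_forall, not_le] at h
    obtain ⟨a, b, hab, hlt⟩ := h
    have hab' := hμ hab
    rcases eq_or_ne a j with rfl | ha
    · rcases eq_or_ne b a with rfl | hb
      · exact absurd hlt (lt_irrefl _)
      · refine ⟨b, lt_of_le_of_ne hab hb.symm, ?_⟩
        simp only [Pi.sub_apply, Pi.single_eq_same, Pi.single_eq_of_ne hb] at hlt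
        omega
    · simp only [Pi.sub_apply, Pi.single_eq_of_ne ha] at hlt
      omega
  by_cases last : (j : ℕ) + 1 = m
  · left
    have : μ j = 0 := by
      by_contra hj
      obtain ⟨i, hi, -⟩ := exists_le (Nat.pos_of_ne_zero hj)
      have := Fin.lt_def.1 hi
      omega
    simp only [betaNumber, this, Fin.val_rev]
    omega
  · right
    have hlt : (j : ℕ) + 1 < m := by omega
    refine ⟨⟨j + 1, hlt⟩, fun e => by simpa using congrArg Fin.val e, ?_⟩
    have hle : μ ⟨j + 1, hlt⟩ ≤ μ j := hμ (Fin.le_def.2 (Nat.le_succ j))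
    have hge : μ j ≤ μ ⟨j + 1, hlt⟩ := by
      rcases Nat.eq_zero_or_pos (μ j) with hj | hj
      · omega
      · obtain ⟨i, hi, hji⟩ := exists_le hj
        exact hji.trans (hμ (Fin.le_def.2 (Nat.succ_le_of_lt (Fin.lt_def.1 hi))))
    simp only [betaNumber, Fin.val_rev]
    omega

/-- The difference product `∏_{i < j} (β i - β j)` of the beta numbers, as a Vandermonde
determinant. -/
def betaDet (μ : Fin m → ℕ) : ℤ := (Matrix.vandermonde fun i => -(betaNumber μ i : ℤ)).det

lemma betaDet_eq_prod (μ : Fin m → ℕ) :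
    betaDet μ = ∏ i, ∏ j ∈ Ioi i, ((betaNumber μ i : ℤ) - betaNumber μ j) := by
  rw [betaDet, Matrix.det_vandermonde]
  exact prod_congr rfl fun i _ => prod_congr rfl fun j _ => by ring

lemma betaDet_zero : betaDet (0 : Fin m → ℕ) = ∏ j, (betaNumber (0 : Fin m → ℕ) j)! := by
  cases m with
  | zero => simp [betaDet]
  | succ m =>
    have shift (i : Fin (m + 1)) : -(betaNumber 0 i : ℤ) = i + -(m : ℤ) := by
      simp only [betaNumber, Pi.zero_apply, Fin.val_rev]
      omega
    have prod_eq : ∏ j, (betaNumber (0 : Fin (m + 1) → ℕ) j)! = m.superFactorial := by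
      simp only [betaNumber, Pi.zero_apply, zero_add]
      rw [← Nat.prod_range_succ_factorial, ← Fin.prod_univ_eq_prod_range]
      exact Equiv.prod_comp Fin.revPerm fun j : Fin (m + 1) => (j : ℕ)!
    rw [prod_eq, betaDet]
    simp only [shift]
    rw [Matrix.det_vandermonde_add, Matrix.det_vandermonde_id_eq_superFactorial]

lemma sum_betaNumber_mul_det_vandermonde (μ : Fin m → ℕ) :
    ∑ j, (betaNumber μ j : ℤ) *
        (Matrix.vandermonde ((fun i => -(betaNumber μ i : ℤ)) + Pi.single j 1)).det =
      (∑ j, μ j : ℕ) * betaDet μ := by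
  have sum_rev : ∑ j : Fin m, ((j.rev : ℕ) : ℤ) = ∑ j : Fin m, ((j : ℕ) : ℤ) :=
    Equiv.sum_comp Fin.revPerm fun j : Fin m => ((j : ℕ) : ℤ)
  have key := sum_mul_det_vandermonde_add_single fun i => -(betaNumber μ i : ℤ)
  simp only [neg_mul, sum_neg_distrib] at key
  rw [← neg_inj, key, betaDet, ← neg_mul, ← sum_rev]
  simp only [betaNumber, Nat.cast_add, Nat.cast_sum, sum_add_distrib]
  ring

lemma det_vandermonde_of_isRemovable (h : IsRemovable μ j) :
    (Matrix.vandermonde ((fun i => -(betaNumber μ i : ℤ)) + Pi.single j 1)).det =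
      betaDet (μ - Pi.single j 1) := by
  obtain ⟨ν, rfl⟩ : ∃ ν : Fin m → ℕ, μ = ν + Pi.single j 1 := ⟨_, (sub_single_add_single h.1).symm⟩
  rw [betaDet, add_tsub_cancel_right, betaNumber_add_single]
  congr 2
  ext i
  rcases eq_or_ne i j with rfl | hij <;> simp [*]

lemma prod_factorial_betaNumber_of_isRemovable (h : IsRemovable μ j) :
    ∏ i, (betaNumber μ i)! = betaNumber μ j * ∏ i, (betaNumber (μ - Pi.single j 1) i)! := by
  obtain ⟨ν, rfl⟩ : ∃ ν : Fin m → ℕ, μ = ν + Pi.single j 1 := ⟨_, (sub_single_add_single h.1).symm⟩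
  rw [add_tsub_cancel_right, betaNumber_add_single, prod_factorial_add_single]
  simp

lemma betaNumber_mul_det_vandermonde_eq_zero (hμ : Antitone μ) (h : ¬ IsRemovable μ j) :
    (betaNumber μ j : ℤ) *
      (Matrix.vandermonde ((fun i => -(betaNumber μ i : ℤ)) + Pi.single j 1)).det = 0 := by
  rcases betaNumber_eq_of_not_isRemovable hμ h with h | ⟨i, hij, h⟩
  · rw [h, Nat.cast_zero, zero_mul]
  · rw [Matrix.det_zero_of_row_eq hij, mul_zero]
    ext k
    simp [Matrix.vandermonde_apply, hij, h]

theorem numStandard_mul_prod_factorial {N : ℕ} (hμ : Antitone μ) (hN : ∑ j, μ j = N) :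
    (numStandard N μ : ℤ) * ∏ j, (betaNumber μ j)! = N ! * betaDet μ := by
  induction N generalizing μ with
  | zero =>
    obtain rfl : μ = 0 := funext fun j => by simpa using (sum_eq_zero_iff.1 hN) j (mem_univ j)
    simp [numStandard, betaDet_zero]
  | succ N ih =>
    have branch (j : Fin m) :
        ((if IsRemovable μ j then numStandard N (μ - Pi.single j 1) else 0 : ℕ) : ℤ) *
            ∏ j, (betaNumber μ j)! =
          N ! * (betaNumber μ j *
            (Matrix.vandermonde ((fun i => -(betaNumber μ i : ℤ)) + Pi.single j 1)).det) := by
      split_ifs with hj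
      · have hN' := ih hj.2 (by have := sum_sub_single_add_one hj.1; omega)
        rw [det_vandermonde_of_isRemovable hj, prod_factorial_betaNumber_of_isRemovable hj,
          Nat.cast_mul]
        linear_combination (betaNumber μ j : ℤ) * hN'
      · rw [betaNumber_mul_det_vandermonde_eq_zero hμ hj, Nat.cast_zero, zero_mul, mul_zero]
    rw [numStandard, Nat.cast_sum, sum_mul, sum_congr rfl fun j _ => branch j, ← mul_sum,
      sum_betaNumber_mul_det_vandermonde, hN, Nat.factorial_succ]
    push_cast
    ring

end StandardTableaux

section Words

/-- The `N`-th tensor power of the free `R`-module on the letters `α`, realised as the functions on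
words of length `N`. -/
abbrev WordSpace (R : Type*) (N : ℕ) (α : Type*) := (Fin N → α) → R

variable {R α : Type*} [CommRing R] {N : ℕ}

variable (R N) in
/-- The part of an element of a tensor power supported on the words starting with the letter `k`,
with that letter removed. -/
def headSlice (k : α) : WordSpace R (N + 1) α →ₗ[R] WordSpace R N α :=
  LinearMap.funLeft R R fun w : Fin N → α => (Fin.cons k w : Fin (N + 1) → α)

lemma headSlice_apply (k : α) (v : WordSpace R (N + 1) α) (w : Fin N → α) :
    headSlice R N k v w = v (Fin.cons k w : Fin (N + 1) → α) := rfl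

lemma ext_headSlice {v v' : WordSpace R (N + 1) α}
    (h : ∀ k, headSlice R N k v = headSlice R N k v') : v = v' := by
  ext w
  rw [← Fin.cons_self_tail w]
  exact congrFun (h (w 0)) (Fin.tail w)

variable [DecidableEq α]

/-- The action of the matrix unit `E i j` of `𝔤𝔩(α)` on the tensor power `WordSpace R N α`: on
words, it changes one letter `j` into `i` in all possible ways. -/
def letterOp (i j : α) : Module.End R (WordSpace R N α) where
  toFun v w := ∑ x, if w x = i then v (Function.update w x j) else 0
  map_add' v v' := by
    ext w
    simp only [Pi.add_apply, ← sum_add_distrib]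
    exact sum_congr rfl fun x _ => by split_ifs <;> simp
  map_smul' c v := by
    ext w
    simp only [Pi.smul_apply, RingHom.id_apply, smul_sum, smul_ite, smul_zero]

lemma letterOp_apply (i j : α) (v : WordSpace R N α) (w : Fin N → α) :
    letterOp i j v w = ∑ x, if w x = i then v (Function.update w x j) else 0 := rfl

lemma letterOp_self_apply (i : α) (v : WordSpace R N α) (w : Fin N → α) :
    letterOp i i v w = #{x | w x = i} * v w := by
  rw [letterOp_apply, natCast_card_filter, sum_mul]
  refine sum_congr rfl fun x _ => ?_
  split_ifs with h
  · rw [← h, Function.update_eq_self, one_mul]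
  · rw [zero_mul]

lemma headSlice_letterOp (k i j : α) (v : WordSpace R (N + 1) α) :
    headSlice R N k (letterOp i j v) =
      (if k = i then headSlice R N j v else 0) + letterOp i j (headSlice R N k v) := by
  ext w
  rw [Pi.add_apply, headSlice_apply, letterOp_apply, Fin.sum_univ_succ, Fin.cons_zero,
    Fin.update_cons_zero]
  simp only [Fin.cons_succ, ← Fin.cons_update]
  split_ifs <;> rfl

lemma letterOp_commutator (i j k l : α) (v : WordSpace R N α) :
    letterOp i j (letterOp k l v) - letterOp k l (letterOp i j v) =
      (if j = k then letterOp i l v else 0) - if l = i then letterOp k j v else 0 := by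
  induction N with
  | zero => ext w; split_ifs <;> simp [letterOp_apply]
  | succ N ih =>
    refine ext_headSlice fun s => ?_
    have ih := ih (headSlice R N s v)
    simp only [map_sub, headSlice_letterOp, map_add, apply_ite (headSlice R N s),
      apply_ite (letterOp (R := R) (N := N) _ _), map_zero]
    split_ifs at ih ⊢ <;> linear_combination (norm := module) ih

end Words

section HighestWeight

variable {R α : Type*} [CommRing R] [DecidableEq α] {N : ℕ}

attribute [local instance] LieRing.ofAssociativeRing in
lemma isSl2Triple_letterOp {i j : α} (hij : i ≠ j)
    (h : (letterOp i i - letterOp j j : Module.End R (WordSpace R N α)) ≠ 0) :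
    IsSl2Triple (letterOp i i - letterOp j j : Module.End R (WordSpace R N α))
      (letterOp i j) (letterOp j i) := by
  refine ⟨h, ?_, ?_, ?_⟩
  all_goals
    refine LinearMap.ext fun v => ?_
    simp only [Ring.lie_def, sub_mul, mul_sub, LinearMap.sub_apply, Module.End.mul_apply,
      LinearMap.smul_apply, LinearMap.neg_apply]
  · rw [letterOp_commutator, if_pos rfl, if_pos rfl]
  · have hi := letterOp_commutator i i i j v
    have hj := letterOp_commutator j j i j v
    simp only [if_true, if_neg hij.symm] at hi hj
    linear_combination (norm := module) hi - hj
  · have hi := letterOp_commutator i i j i v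
    have hj := letterOp_commutator j j j i v
    simp only [if_true, if_neg hij] at hi hj
    linear_combination (norm := module) hi - hj

attribute [local instance] LieRing.ofAssociativeRing in
lemma eq_zero_of_letterOp_eq_zero [IsDomain R] [CharZero R] [IsNoetherianRing R] [Finite α]
    {i j : α} {a b : ℕ} (hab : a < b)
    {v : WordSpace R N α} (hi : letterOp i i v = (a : R) • v) (hj : letterOp j j v = (b : R) • v)
    (h : letterOp i j v = 0) : v = 0 := by
  by_contra hv
  have weight : (letterOp i i - letterOp j j : Module.End R (WordSpace R N α)) v =
      ((a : R) - b) • v := by rw [LinearMap.sub_apply, hi, hj, sub_smul]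
  have weight_ne : ((a : R) - b) • v ≠ 0 :=
    smul_ne_zero (sub_ne_zero.2 (Nat.cast_injective.ne hab.ne)) hv
  have hij : i ≠ j := by
    rintro rfl
    exact weight_ne (by rw [← weight, sub_self, LinearMap.zero_apply])
  have triple := isSl2Triple_letterOp (R := R) (N := N) hij fun h0 =>
    weight_ne (by rw [← weight, h0, LinearMap.zero_apply])
  have primitive : triple.HasPrimitiveVectorWith v ((a : R) - b) := ⟨hv, weight, h⟩
  obtain ⟨n, hn⟩ := primitive.exists_nat
  rw [sub_eq_iff_eq_add, ← Nat.cast_add, Nat.cast_inj] at hn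
  omega

/-- The vectors of weight `μ` in `(Rᵐ)^{⊗N}` killed by all raising operators of `𝔤𝔩ₘ`. -/
def highestWeightSpace (R : Type*) [CommRing R] (N : ℕ) {m : ℕ} (μ : Fin m → ℕ) :
    Submodule R (WordSpace R N (Fin m)) :=
  (⨅ i, Module.End.eigenspace (letterOp i i) (μ i : R)) ⊓
    ⨅ i, ⨅ j > i, LinearMap.ker (letterOp i j)

variable {m : ℕ} {μ : Fin m → ℕ}

lemma mem_highestWeightSpace {v : WordSpace R N (Fin m)} :
    v ∈ highestWeightSpace R N μ ↔
      (∀ i, letterOp i i v = (μ i : R) • v) ∧ ∀ i, ∀ j > i, letterOp i j v = 0 := by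
  simp [highestWeightSpace, Submodule.mem_iInf]

lemma highestWeightSpace_eq_bot [IsDomain R] [CharZero R] [IsNoetherianRing R]
    (h : ¬ Antitone μ) : highestWeightSpace R N μ = ⊥ := by
  simp only [Antitone, not_forall, not_le] at h
  obtain ⟨i, j, hij, hlt⟩ := h
  have hij : i < j := lt_of_le_of_ne hij (by rintro rfl; exact lt_irrefl _ hlt)
  refine (Submodule.eq_bot_iff _).2 fun v hv => ?_
  obtain ⟨weight, raise⟩ := mem_highestWeightSpace.1 hv
  exact eq_zero_of_letterOp_eq_zero hlt (weight i) (weight j) (raise i j hij)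

lemma headSlice_mem_highestWeightSpace {v : WordSpace R (N + 1) (Fin m)} {k : Fin m} (hk : 0 < μ k)
    (hv : v ∈ highestWeightSpace R (N + 1) μ) (h : ∀ j > k, headSlice R N j v = 0) :
    headSlice R N k v ∈ highestWeightSpace R N (μ - Pi.single k 1) := by
  obtain ⟨weight, raise⟩ := mem_highestWeightSpace.1 hv
  refine mem_highestWeightSpace.2 ⟨fun i => ?_, fun i j hij => ?_⟩
  · have slice := congrArg (headSlice R N k) (weight i)
    rw [headSlice_letterOp, map_smul] at slice
    rcases eq_or_ne i k with rfl | hik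
    · rw [if_pos rfl] at slice
      rw [Pi.sub_apply, Pi.single_eq_same, Nat.cast_sub hk, Nat.cast_one]
      linear_combination (norm := module) slice
    · simpa [hik, hik.symm] using slice
  · have slice := congrArg (headSlice R N k) (raise i j hij)
    rw [headSlice_letterOp, map_zero] at slice
    split_ifs at slice with hki
    · rwa [h j (hki ▸ hij), zero_add] at slice
    · rwa [zero_add] at slice

lemma headSlice_eq_zero_of_weight_eq_zero [IsDomain R] [CharZero R]
    {v : WordSpace R (N + 1) (Fin m)} {k : Fin m} (hk : μ k = 0)
    (hv : v ∈ highestWeightSpace R (N + 1) μ) : headSlice R N k v = 0 := by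
  ext w
  have weight := congrFun ((mem_highestWeightSpace.1 hv).1 k) (Fin.cons k w)
  rw [letterOp_self_apply, hk, Nat.cast_zero, zero_smul, Pi.zero_apply, mul_eq_zero,
    Nat.cast_eq_zero, card_eq_zero] at weight
  exact weight.resolve_left (Finset.Nonempty.ne_empty ⟨0, by simp⟩)

end HighestWeight

section Filtration

open Module

variable {𝕜 V V' : Type*} [Field 𝕜] [AddCommGroup V] [Module 𝕜 V] [FiniteDimensional 𝕜 V]
  [AddCommGroup V'] [Module 𝕜 V']

lemma finrank_eq_finrank_map_add_finrank_inf_ker (W : Submodule 𝕜 V) (f : V →ₗ[𝕜] V') :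
    finrank 𝕜 W = finrank 𝕜 (W.map f) + finrank 𝕜 (W ⊓ LinearMap.ker f : Submodule 𝕜 V) := by
  rw [← LinearMap.finrank_range_add_finrank_ker (f.domRestrict W), LinearMap.range_domRestrict,
    LinearMap.ker_domRestrict, ← Submodule.map_comap_subtype]
  congr 1
  exact (Submodule.equivMapOfInjective _ W.injective_subtype _).finrank_eq

lemma finrank_eq_sum_finrank_map_add_finrank {m : ℕ} (W : Submodule 𝕜 V)
    (f : Fin m → V →ₗ[𝕜] V') :
    finrank 𝕜 W =
      ∑ k, finrank 𝕜 ((W ⊓ ⨅ j > k, LinearMap.ker (f j)).map (f k)) +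
        finrank 𝕜 (W ⊓ ⨅ j, LinearMap.ker (f j) : Submodule 𝕜 V) := by
  induction m generalizing W with
  | zero => rw [iInf_of_empty, inf_top_eq, Fin.sum_univ_zero, zero_add]
  | succ m ih =>
    have inf_castSucc (k : Fin m) :
        W ⊓ LinearMap.ker (f (Fin.last m)) ⊓ ⨅ j > k, LinearMap.ker (f j.castSucc) =
          W ⊓ ⨅ j > k.castSucc, LinearMap.ker (f j) := by
      ext v
      simp [Submodule.mem_iInf, Fin.forall_fin_succ', Fin.castSucc_lt_last, and_assoc, and_comm]
    have inf_last : ⨅ j > Fin.last m, LinearMap.ker (f j) = ⊤ := by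
      simp [Fin.not_lt.2 (Fin.le_last _)]
    have inf_ker : W ⊓ LinearMap.ker (f (Fin.last m)) ⊓ ⨅ j : Fin m, LinearMap.ker (f j.castSucc) =
        W ⊓ ⨅ j, LinearMap.ker (f j) := by
      ext v
      simp [Submodule.mem_iInf, Fin.forall_fin_succ', and_assoc, and_comm]
    rw [finrank_eq_finrank_map_add_finrank_inf_ker W (f (Fin.last m)),
      ih (W ⊓ LinearMap.ker (f (Fin.last m))) (fun k => f k.castSucc), Fin.sum_univ_castSucc,
      inf_last, inf_top_eq, inf_ker, ← add_assoc]
    nth_rw 1 [add_comm (finrank 𝕜 _)]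
    congr 2
    exact sum_congr rfl fun k _ => by rw [inf_castSucc]

end Filtration

section UpperBound

open Module

variable {𝕜 : Type*} [Field 𝕜]

/-- The graded piece at `k` of `W` for the filtration of words by their first letter: the slices at
`k` of the elements of `W` whose slices beyond `k` all vanish. -/
def leadingSlices {N m : ℕ} (W : Submodule 𝕜 (WordSpace 𝕜 (N + 1) (Fin m))) (k : Fin m) :
    Submodule 𝕜 (WordSpace 𝕜 N (Fin m)) :=
  (W ⊓ ⨅ j > k, LinearMap.ker (headSlice 𝕜 N j)).map (headSlice 𝕜 N k)

lemma sum_finrank_leadingSlices {N m : ℕ} (W : Submodule 𝕜 (WordSpace 𝕜 (N + 1) (Fin m))) :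
    ∑ k, finrank 𝕜 (leadingSlices W k) = finrank 𝕜 W := by
  have inf_ker : ⨅ j : Fin m, LinearMap.ker (headSlice 𝕜 N j) = ⊥ := by
    refine (Submodule.eq_bot_iff _).2 fun v hv => ext_headSlice fun k => ?_
    rw [map_zero]
    exact (Submodule.mem_iInf _).1 hv k
  rw [finrank_eq_sum_finrank_map_add_finrank W (headSlice 𝕜 N), inf_ker, inf_bot_eq,
    finrank_bot, add_zero]
  rfl

variable {m : ℕ}

lemma leadingSlices_highestWeightSpace_le {N : ℕ} {μ : Fin m → ℕ} {k : Fin m} (hk : 0 < μ k) :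
    leadingSlices (highestWeightSpace 𝕜 (N + 1) μ) k ≤
      highestWeightSpace 𝕜 N (μ - Pi.single k 1) := by
  rintro _ ⟨v, ⟨hv, hker⟩, rfl⟩
  refine headSlice_mem_highestWeightSpace hk hv ?_
  simpa [Submodule.mem_iInf] using hker

theorem finrank_highestWeightSpace_le [CharZero 𝕜] (N : ℕ) (μ : Fin m → ℕ) :
    finrank 𝕜 (highestWeightSpace 𝕜 N μ) ≤ numStandard N μ := by
  induction N generalizing μ with
  | zero =>
    calc finrank 𝕜 (highestWeightSpace 𝕜 0 μ) ≤ finrank 𝕜 (WordSpace 𝕜 0 (Fin m)) :=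
          Submodule.finrank_le _
      _ = numStandard 0 μ := by simp [numStandard]
  | succ N ih =>
    rw [← sum_finrank_leadingSlices, numStandard]
    refine sum_le_sum fun k _ => ?_
    split_ifs with hk
    · exact (Submodule.finrank_mono (leadingSlices_highestWeightSpace_le hk.1)).trans (ih _)
    · rw [Nat.le_zero, Submodule.finrank_eq_zero, Submodule.eq_bot_iff]
      rcases Nat.eq_zero_or_pos (μ k) with h | h
      · rintro _ ⟨v, ⟨hv, -⟩, rfl⟩
        exact headSlice_eq_zero_of_weight_eq_zero h hv
      · intro v hv
        rw [← Submodule.mem_bot 𝕜, ← highestWeightSpace_eq_bot fun anti => hk ⟨h, anti⟩]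
        exact leadingSlices_highestWeightSpace_le h hv

end UpperBound

section Tableaux

/-- `(row, col)` fills the Young diagram with columns of length `μ` with the letters `Fin N`, each
of them used once. -/
structure IsColTableau {N m : ℕ} (μ : Fin m → ℕ) (row : Fin N → ℕ) (col : Fin N → Fin m) :
    Prop where
  eq_of_row_eq_of_col_eq : ∀ ⦃x y⦄, row x = row y → col x = col y → x = y
  exists_iff_lt : ∀ r i, (∃ x, row x = r ∧ col x = i) ↔ r < μ i

namespace IsColTableau

variable {N m : ℕ} {μ : Fin m → ℕ} {row : Fin N → ℕ} {col : Fin N → Fin m}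

lemma row_lt (h : IsColTableau μ row col) (x : Fin N) : row x < μ (col x) :=
  (h.exists_iff_lt _ _).1 ⟨x, rfl, rfl⟩

lemma card_filter_col_eq (h : IsColTableau μ row col) (i : Fin m) : #{x | col x = i} = μ i := by
  have inj : Set.InjOn row ({x | col x = i} : Finset (Fin N)) := fun x hx y hy hxy =>
    h.eq_of_row_eq_of_col_eq hxy (by simp_all)
  rw [← card_range (μ i), ← card_image_of_injOn inj]
  congr 1
  ext r
  simp only [mem_image, mem_filter_univ, mem_range, ← h.exists_iff_lt, and_comm]

lemma sum_eq (h : IsColTableau μ row col) : ∑ i, μ i = N := by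
  simp only [← h.card_filter_col_eq]
  rw [← card_eq_sum_card_fiberwise fun x _ => mem_univ (col x), card_univ, Fintype.card_fin]

lemma cons (h : IsColTableau μ row col) (j : Fin m) :
    IsColTableau (μ + Pi.single j 1) (Fin.cons (μ j) row : Fin (N + 1) → ℕ)
      (Fin.cons j col : Fin (N + 1) → Fin m) where
  eq_of_row_eq_of_col_eq x y hrow hcol := by
    have new_cell (x : Fin N) (hrow : row x = μ j) (hcol : col x = j) : False :=
      (hcol ▸ hrow ▸ h.row_lt x).false
    cases x using Fin.cases <;> cases y using Fin.cases <;>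
      simp only [Fin.cons_zero, Fin.cons_succ] at hrow hcol
    · rfl
    · exact (new_cell _ hrow.symm hcol.symm).elim
    · exact (new_cell _ hrow hcol).elim
    · exact congrArg Fin.succ (h.eq_of_row_eq_of_col_eq hrow hcol)
  exists_iff_lt r i := by
    rw [Fin.exists_fin_succ]
    simp only [Fin.cons_zero, Fin.cons_succ, h.exists_iff_lt, Pi.add_apply]
    rcases eq_or_ne i j with rfl | hij
    · rw [Pi.single_eq_same]
      omega
    · simp [hij, hij.symm]

lemma comp_perm (h : IsColTableau μ row col) (σ : Perm (Fin N)) :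
    IsColTableau μ (row ∘ σ) (col ∘ σ) where
  eq_of_row_eq_of_col_eq _ _ hrow hcol := σ.injective (h.eq_of_row_eq_of_col_eq hrow hcol)
  exists_iff_lt r i := by
    rw [← h.exists_iff_lt]
    exact (σ.surjective.exists (p := fun x => row x = r ∧ col x = i)).symm

lemma exists_perm {row' : Fin N → ℕ} {col' : Fin N → Fin m} (h : IsColTableau μ row col)
    (h' : IsColTableau μ row' col') : ∃ σ : Perm (Fin N), row' = row ∘ σ ∧ col' = col ∘ σ := by
  choose σ hrow hcol using fun x => (h.exists_iff_lt (row' x) (col' x)).2 (h'.row_lt x)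
  have inj : Function.Injective σ := fun x y hxy =>
    h'.eq_of_row_eq_of_col_eq (by rw [← hrow, hxy, hrow]) (by rw [← hcol, hxy, hcol])
  exact ⟨Equiv.ofBijective σ (Finite.injective_iff_bijective.1 inj),
    funext fun x => (hrow x).symm, funext fun x => (hcol x).symm⟩

end IsColTableau

end Tableaux

section Polytabloids

variable {N : ℕ} {α : Type*} [DecidableEq α]

lemma mem_stab {h : Fin N → ℕ} {σ : Perm (Fin N)} : σ ∈ stab h ↔ ∀ x, h (σ x) = h x :=
  mem_filter_univ _

lemma sgnC_mul (σ τ : Perm (Fin N)) : sgnC (σ * τ) = sgnC σ * sgnC τ := by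
  simp [sgnC]

/-- The word `col` antisymmetrised along the rows. If `(row, col)` is a tableau this is, up to
conjugating the diagram, the polytabloid of the tableau: a word records the column of each letter,
that is, a column tabloid. -/
def polytabloid (row : Fin N → ℕ) (col : Fin N → α) : WordSpace ℂ N α :=
  fun w => ∑ σ ∈ stab row, if col ∘ σ = w then sgnC σ else 0

lemma polytabloid_eq_zero {row : Fin N → ℕ} {col : Fin N → α} {x y : Fin N} (hxy : x ≠ y)
    (hrow : row x = row y) (hcol : col x = col y) : polytabloid row col = 0 := by
  have row_swap (z : Fin N) : row (swap x y z) = row z := by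
    rw [← Function.comp_apply (f := row), comp_swap_eq_update, hrow, Function.update_eq_self,
      ← hrow, Function.update_eq_self]
  have col_swap (σ : Perm (Fin N)) : col ∘ (swap x y * σ : Perm (Fin N)) = col ∘ σ := by
    rw [Perm.coe_mul, ← Function.comp_assoc, comp_swap_eq_update, hcol, Function.update_eq_self,
      ← hcol, Function.update_eq_self]
  ext w
  refine sum_involution (fun σ _ => swap x y * σ) (fun σ _ => ?_) (fun σ _ _ h => ?_)
    (fun σ hσ => ?_) fun σ _ => swap_mul_self_mul x y σ
  · rw [col_swap, sgnC_mul]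
    split_ifs <;> simp [sgnC, Perm.sign_swap hxy]
  · exact hxy (swap_eq_one_iff.1 (mul_eq_right.1 h))
  · exact mem_stab.2 fun z => (row_swap (σ z)).trans (mem_stab.1 hσ z)

lemma letterOp_polytabloid (i j : α) (row : Fin N → ℕ) (col : Fin N → α) :
    letterOp i j (polytabloid row col) =
      ∑ y with col y = j, polytabloid row (Function.update col y i) := by
  ext w
  have change_letter (σ : Perm (Fin N)) (x : Fin N) :
      (w x = i ∧ col ∘ σ = Function.update w x j) ↔
        col (σ x) = j ∧ Function.update col (σ x) i ∘ σ = w := by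
    rw [Function.update_comp_eq_of_injective _ σ.injective, Function.update_eq_iff,
      Function.eq_update_iff]
    simp only [Function.comp_apply]
    grind
  calc letterOp i j (polytabloid row col) w
    _ = ∑ σ ∈ stab row, ∑ x, if col (σ x) = j ∧ Function.update col (σ x) i ∘ σ = w then
          sgnC σ else 0 := by
        simp only [letterOp_apply, polytabloid, ← change_letter, ite_and]
        rw [sum_comm]
        exact sum_congr rfl fun x _ => by split_ifs <;> simp
    _ = ∑ σ ∈ stab row, ∑ y, if col y = j ∧ Function.update col y i ∘ σ = w then
          sgnC σ else 0 := sum_congr rfl fun σ _ => Equiv.sum_comp σ fun y =>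
            if col y = j ∧ Function.update col y i ∘ σ = w then sgnC σ else 0
    _ = _ := by
        rw [sum_comm, sum_filter, Finset.sum_apply]
        refine sum_congr rfl fun y _ => ?_
        simp only [ite_and]
        split_ifs <;> simp [polytabloid]

end Polytabloids

section PolytabloidSpan

open Module

variable {N m : ℕ} {μ : Fin m → ℕ} {row : Fin N → ℕ} {col : Fin N → Fin m}

lemma polytabloid_mem_highestWeightSpace (hμ : Antitone μ) (h : IsColTableau μ row col) :
    polytabloid row col ∈ highestWeightSpace ℂ N μ := by
  refine mem_highestWeightSpace.2 ⟨fun i => ?_, fun i j hij => ?_⟩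
  · have update_eq (y : Fin N) (hy : y ∈ univ.filter (col · = i)) :
        polytabloid row (Function.update col y i) = polytabloid row col := by
      rw [← (mem_filter_univ _).1 hy, Function.update_eq_self]
    rw [letterOp_polytabloid, sum_congr rfl update_eq, sum_const, h.card_filter_col_eq,
      Nat.cast_smul_eq_nsmul]
  · rw [letterOp_polytabloid]
    refine sum_eq_zero fun y hy => ?_
    have hy : col y = j := (mem_filter_univ y).1 hy
    obtain ⟨x, hrow, hcol⟩ :=
      (h.exists_iff_lt (row y) i).2 ((h.row_lt y).trans_le (hμ (hy ▸ hij.le)))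
    have hxy : x ≠ y := by
      rintro rfl
      exact hij.ne (hcol.symm.trans hy)
    refine polytabloid_eq_zero hxy hrow ?_
    rw [Function.update_of_ne hxy, Function.update_self, hcol]

lemma headSlice_polytabloid_cons_of_lt (hμ : Antitone μ) (h : IsColTableau μ row col)
    {j k : Fin m} (hjk : j < k) :
    headSlice ℂ N k (polytabloid (Fin.cons (μ j) row : Fin (N + 1) → ℕ)
      (Fin.cons j col : Fin (N + 1) → Fin m)) = 0 := by
  ext w
  refine sum_eq_zero fun σ hσ => if_neg fun hw => ?_
  have hrow := mem_stab.1 hσ 0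
  have hcol : (Fin.cons j col : Fin (N + 1) → Fin m) (σ 0) = k := congrFun hw 0
  have hlt := (h.cons j).row_lt (σ 0)
  rw [hrow, hcol, Fin.cons_zero, Pi.add_apply, Pi.single_eq_of_ne hjk.ne', add_zero] at hlt
  exact hlt.not_ge (hμ hjk.le)

lemma headSlice_polytabloid_cons_self (h : IsColTableau μ row col) (j : Fin m) :
    headSlice ℂ N j (polytabloid (Fin.cons (μ j) row : Fin (N + 1) → ℕ)
      (Fin.cons j col : Fin (N + 1) → Fin m)) = polytabloid row col := by
  ext w
  have extend_zero (σ : Perm (Fin N)) : Perm.decomposeFin.symm (0, σ) 0 = 0 := by simp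
  have extend_succ (σ : Perm (Fin N)) (x : Fin N) :
      Perm.decomposeFin.symm (0, σ) x.succ = (σ x).succ := by simp
  simp only [headSlice_apply, polytabloid, stab, sum_filter, ← ite_and]
  rw [← Equiv.sum_comp Perm.decomposeFin.symm, Fintype.sum_prod_type,
    sum_eq_single_of_mem 0 (mem_univ _)]
  · refine sum_congr rfl fun σ _ => if_congr ?_ (by simp [sgnC]) rfl
    simp only [Fin.forall_fin_succ, funext_iff, Function.comp_apply, extend_zero, extend_succ,
      Fin.cons_zero, Fin.cons_succ, true_and]
  · refine fun p _ hp => sum_eq_zero fun σ _ => if_neg ?_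
    rintro ⟨hrow, hcol⟩
    have hrow := hrow 0
    have hcol := congrFun hcol 0
    simp only [Function.comp_apply, Perm.decomposeFin_symm_apply_zero] at hrow hcol
    exact hp ((h.cons j).eq_of_row_eq_of_col_eq hrow hcol)

/-- The Specht module of the partition `μ`, as the span of the polytabloids of all tableaux with
columns of length `μ`. Its sign twist is the Specht module of the diagram with these columns. -/
def polytabloidSpan (N : ℕ) {m : ℕ} (μ : Fin m → ℕ) : Submodule ℂ (WordSpace ℂ N (Fin m)) :=
  Submodule.span ℂ {v | ∃ row col, IsColTableau μ row col ∧ polytabloid row col = v}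

lemma polytabloidSpan_le_highestWeightSpace (hμ : Antitone μ) :
    polytabloidSpan N μ ≤ highestWeightSpace ℂ N μ := by
  rw [polytabloidSpan, Submodule.span_le]
  rintro _ ⟨row, col, h, rfl⟩
  exact polytabloid_mem_highestWeightSpace hμ h

lemma polytabloidSpan_le_leadingSlices {k : Fin m} (hk : IsRemovable μ k) :
    polytabloidSpan N (μ - Pi.single k 1) ≤ leadingSlices (polytabloidSpan (N + 1) μ) k := by
  rw [polytabloidSpan, Submodule.span_le]
  rintro _ ⟨row, col, h, rfl⟩
  refine ⟨_, ⟨Submodule.subset_span ⟨_, _, ?_, rfl⟩, ?_⟩, headSlice_polytabloid_cons_self h k⟩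
  · simpa only [sub_single_add_single hk.1] using h.cons k
  · simpa [Submodule.mem_iInf] using fun i =>
      headSlice_polytabloid_cons_of_lt hk.2 h (j := k) (k := i)

lemma numStandard_le_finrank_polytabloidSpan (hN : ∑ i, μ i = N) :
    numStandard N μ ≤ finrank ℂ (polytabloidSpan N μ) := by
  induction N generalizing μ with
  | zero =>
    obtain rfl : μ = 0 := funext fun j => by simpa using (sum_eq_zero_iff.1 hN) j (mem_univ j)
    have empty : IsColTableau (0 : Fin m → ℕ) (Fin.elim0 : Fin 0 → ℕ) Fin.elim0 :=
      ⟨fun x => x.elim0, fun r i => by simp⟩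
    refine Submodule.one_le_finrank_iff.2 ((Submodule.ne_bot_iff _).2
      ⟨_, Submodule.subset_span ⟨_, _, empty, rfl⟩, fun h => ?_⟩)
    simpa [polytabloid, stab, sgnC, Subsingleton.elim _ (Fin.elim0 : Fin 0 → Fin m)]
      using congrFun h Fin.elim0
  | succ N ih =>
    rw [numStandard, ← sum_finrank_leadingSlices]
    refine sum_le_sum fun k _ => ?_
    split_ifs with hk
    · have hN' := ih (μ := μ - Pi.single k 1) (by have := sum_sub_single_add_one hk.1; omega)
      exact hN'.trans (Submodule.finrank_mono (polytabloidSpan_le_leadingSlices hk))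
    · exact Nat.zero_le _

theorem finrank_polytabloidSpan (hμ : Antitone μ) (hN : ∑ i, μ i = N) :
    finrank ℂ (polytabloidSpan N μ) = numStandard N μ :=
  ((Submodule.finrank_mono (polytabloidSpan_le_highestWeightSpace hμ)).trans
    (finrank_highestWeightSpace_le N μ)).antisymm (numStandard_le_finrank_polytabloidSpan hN)

end PolytabloidSpan

section CyclicLeftIdeal

open Module

lemma restrictScalars_span_singleton {k G : Type*} [CommSemiring k] [Monoid G]
    (y : MonoidAlgebra k G) : (Ideal.span {y}).restrictScalars k =
      Submodule.span k (Set.range fun g => MonoidAlgebra.of k G g * y) := by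
  refine le_antisymm (fun z hz => ?_) (Submodule.span_le.2 ?_)
  · obtain ⟨a, rfl⟩ := Ideal.mem_span_singleton'.1 hz
    clear hz
    induction a using MonoidAlgebra.induction_on with
    | of g => exact Submodule.subset_span ⟨g, rfl⟩
    | add a b ha hb =>
      rw [add_mul]
      exact Submodule.add_mem _ ha hb
    | smul c a ha =>
      rw [smul_mul_assoc]
      exact Submodule.smul_mem _ c ha
  · rintro _ ⟨g, rfl⟩
    exact Ideal.mem_span_singleton'.2 ⟨_, rfl⟩

lemma finrank_span_singleton_eq_rank {k G : Type*} [Field k] [Group G] [Fintype G]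
    (y : MonoidAlgebra k G) : finrank k ((Ideal.span {y}).restrictScalars k) =
      (Matrix.of fun g h : G => y.coeff (g⁻¹ * h)).rank := by
  let coeffs : MonoidAlgebra k G ≃ₗ[k] G → k :=
    (MonoidAlgebra.coeffLinearEquiv k).trans (Finsupp.linearEquivFunOnFinite k k G)
  have row_eq : (Matrix.of fun g h : G => y.coeff (g⁻¹ * h)).row =
      coeffs ∘ fun g => MonoidAlgebra.of k G g * y := by
    ext g h
    change _ = (MonoidAlgebra.of k G g * y).coeff h
    simp
  rw [restrictScalars_span_singleton, Matrix.rank_eq_finrank_span_row, row_eq, Set.range_comp,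
    ← LinearEquiv.finrank_map_eq coeffs, Submodule.map_span]
  rfl

end CyclicLeftIdeal

section SpechtIdeal

open Module

variable {N m : ℕ}

lemma sgnC_mul_self (σ : Perm (Fin N)) : sgnC σ * sgnC σ = 1 := by
  rw [← sgnC_mul]
  simp [sgnC]

lemma sgnC_inv (σ : Perm (Fin N)) : sgnC σ⁻¹ = sgnC σ := by
  simp [sgnC]

lemma coeff_sum_sgnC_smul_ofP (s : Finset (Perm (Fin N))) (g : Perm (Fin N)) :
    (∑ σ ∈ s, sgnC σ • ofP σ).coeff g = if g ∈ s then sgnC g else 0 := by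
  simp [ofP, MonoidAlgebra.coeff_sum, Finsupp.finsetSum_apply, Finsupp.single_apply]

lemma mul_inv_mem_stab {col : Fin N → ℕ} {g r : Perm (Fin N)} :
    g * r⁻¹ ∈ stab col ↔ col ∘ r = col ∘ g := by
  rw [mem_stab, ← r.forall_congr_right]
  simp [funext_iff, eq_comm]

lemma coeff_youngSym (row : Fin N → ℕ) (col : Fin N → Fin m) (g : Perm (Fin N)) :
    (youngSym row fun x => (col x : ℕ)).coeff g = sgnC g * polytabloid row col (col ∘ g) := by
  have same_columns (r : Perm (Fin N)) :
      g * r⁻¹ ∈ stab (fun x => (col x : ℕ)) ↔ col ∘ r = col ∘ g :=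
    mul_inv_mem_stab.trans (Fin.val_injective.comp_left.eq_iff (a := col ∘ r) (b := col ∘ g))
  rw [youngSym, mul_sum, MonoidAlgebra.coeff_sum, Finsupp.finsetSum_apply, polytabloid, mul_sum]
  refine sum_congr rfl fun r _ => ?_
  rw [ofP, MonoidAlgebra.of_apply, MonoidAlgebra.coeff_mul_single_apply, mul_one,
    coeff_sum_sgnC_smul_ofP, sgnC_mul, sgnC_inv, mul_ite, mul_zero]
  exact if_congr (same_columns r) rfl rfl

lemma polytabloid_comp_perm {α : Type*} [DecidableEq α] (row : Fin N → ℕ) (col : Fin N → α)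
    (σ : Perm (Fin N)) (w : Fin N → α) :
    polytabloid (row ∘ σ) (col ∘ σ) w = polytabloid row col (w ∘ (σ⁻¹ : Perm (Fin N))) := by
  have sgnC_conj (τ : Perm (Fin N)) : sgnC (σ⁻¹ * τ * σ) = sgnC τ := by
    rw [sgnC_mul, sgnC_mul, sgnC_inv, mul_right_comm, sgnC_mul_self, one_mul]
  have row_conj (τ : Perm (Fin N)) : σ⁻¹ * τ * σ ∈ stab (row ∘ σ) ↔ τ ∈ stab row := by
    rw [mem_stab, mem_stab, ← σ.forall_congr_right (q := fun x => row (τ x) = row x)]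
    simp
  have col_conj (τ : Perm (Fin N)) :
      (col ∘ σ) ∘ (σ⁻¹ * τ * σ : Perm (Fin N)) = w ↔ col ∘ τ = w ∘ (σ⁻¹ : Perm (Fin N)) := by
    rw [show w ∘ (σ⁻¹ : Perm (Fin N)) = w ∘ σ.symm from rfl, Equiv.eq_comp_symm]
    simp [funext_iff]
  refine (sum_equiv (MulAut.conj σ⁻¹).toEquiv (fun τ => ?_) fun τ _ => ?_).symm
  · simpa [MulAut.conj_apply] using (row_conj τ).symm
  · simp only [MulEquiv.toEquiv_eq_coe, MulEquiv.coe_toEquiv, MulAut.conj_apply, inv_inv,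
      sgnC_conj, col_conj]

lemma polytabloidSpan_eq_span_range {μ : Fin m → ℕ} {row : Fin N → ℕ} {col : Fin N → Fin m}
    (h : IsColTableau μ row col) : polytabloidSpan N μ = Submodule.span ℂ
      (Set.range fun τ : Perm (Fin N) => fun w => polytabloid row col (w ∘ τ)) := by
  rw [polytabloidSpan]
  congr 1
  ext v
  constructor
  · rintro ⟨row', col', h', rfl⟩
    obtain ⟨σ, rfl, rfl⟩ := h.exists_perm h'
    exact ⟨σ⁻¹, funext fun w => (polytabloid_comp_perm row col σ w).symm⟩
  · rintro ⟨τ, rfl⟩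
    exact ⟨_, _, h.comp_perm τ⁻¹, funext fun w => by rw [polytabloid_comp_perm, inv_inv]⟩

lemma eq_zero_of_mem_polytabloidSpan {μ : Fin m → ℕ} {row : Fin N → ℕ} {col : Fin N → Fin m}
    (h : IsColTableau μ row col) {v : WordSpace ℂ N (Fin m)} (hv : v ∈ polytabloidSpan N μ)
    (hcol : ∀ σ : Perm (Fin N), v (col ∘ σ) = 0) : v = 0 := by
  ext w
  by_cases hw : ∃ σ : Perm (Fin N), col ∘ σ = w
  · obtain ⟨σ, rfl⟩ := hw
    exact hcol σ
  have span_le : polytabloidSpan N μ ≤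
      LinearMap.ker (LinearMap.proj (R := ℂ) (φ := fun _ => ℂ) w) := by
    refine Submodule.span_le.2 ?_
    rintro _ ⟨row', col', h', rfl⟩
    obtain ⟨σ, rfl, rfl⟩ := h.exists_perm h'
    exact sum_eq_zero fun τ _ => if_neg fun hτ => hw ⟨σ * τ, hτ⟩
  exact span_le hv

lemma finrank_polytabloidSpan_eq_rank {μ : Fin m → ℕ} {row : Fin N → ℕ} {col : Fin N → Fin m}
    (h : IsColTableau μ row col) : finrank ℂ (polytabloidSpan N μ) =
      (Matrix.of fun σ τ : Perm (Fin N) =>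
        polytabloid row col (col ∘ (σ⁻¹ * τ : Perm (Fin N)))).rank := by
  let restrict := LinearMap.funLeft ℂ ℂ fun σ : Perm (Fin N) => col ∘ (σ⁻¹ : Perm (Fin N))
  have inf_ker : polytabloidSpan N μ ⊓ LinearMap.ker restrict = ⊥ :=
    (Submodule.eq_bot_iff _).2 fun v hv => eq_zero_of_mem_polytabloidSpan h hv.1 fun σ => by
      simpa only [restrict, LinearMap.funLeft_apply, inv_inv, Pi.zero_apply] using
        congrFun (LinearMap.mem_ker.1 hv.2) σ⁻¹
  have row_eq : (Matrix.of fun σ τ : Perm (Fin N) =>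
      polytabloid row col (col ∘ (σ⁻¹ * τ : Perm (Fin N)))).transpose.row =
        restrict ∘ fun τ : Perm (Fin N) => fun w => polytabloid row col (w ∘ τ) := rfl
  rw [finrank_eq_finrank_map_add_finrank_inf_ker _ restrict, inf_ker, finrank_bot, add_zero,
    polytabloidSpan_eq_span_range h, ← Matrix.rank_transpose, Matrix.rank_eq_finrank_span_row,
    row_eq, Set.range_comp, ← Submodule.map_span]

theorem finrank_spechtIdeal {μ : Fin m → ℕ} {row : Fin N → ℕ} {col : Fin N → Fin m}
    (h : IsColTableau μ row col) :
    finrank ℂ ((SpechtIdeal row fun x => (col x : ℕ)).restrictScalars ℂ) =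
      finrank ℂ (polytabloidSpan N μ) := by
  let D : Matrix (Perm (Fin N)) (Perm (Fin N)) ℂ := Matrix.diagonal sgnC
  have hD : IsUnit D.det := by
    rw [Matrix.det_diagonal, IsUnit.prod_univ_iff]
    exact fun σ => IsUnit.of_mul_eq_one _ (sgnC_mul_self σ)
  have sign_twist : (Matrix.of fun σ τ : Perm (Fin N) =>
      (youngSym row fun x => (col x : ℕ)).coeff (σ⁻¹ * τ)) =
        D * (Matrix.of fun σ τ => polytabloid row col (col ∘ (σ⁻¹ * τ : Perm (Fin N)))) * D := by
    ext σ τ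
    rw [Matrix.mul_diagonal, Matrix.diagonal_mul, Matrix.of_apply, Matrix.of_apply,
      coeff_youngSym, sgnC_mul, sgnC_inv, mul_right_comm]
  rw [SpechtIdeal, finrank_span_singleton_eq_rank, sign_twist,
    Matrix.rank_mul_eq_left_of_isUnit_det _ _ hD, Matrix.rank_mul_eq_right_of_isUnit_det _ _ hD,
    finrank_polytabloidSpan_eq_rank h]

end SpechtIdeal

section DimensionFormula

open Nat Module

theorem finrank_spechtIdeal_mul_prod_factorial {N m : ℕ} {f : ℕ → ℕ} {μ : Fin m → ℕ}
    {row col : Fin N → ℕ} (h : IsTableau f row col) (hf : ∀ r, f r ≤ m)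
    (hμ : ∀ r (i : Fin m), (i : ℕ) < f r ↔ r < μ i) :
    (finrank ℂ ((SpechtIdeal row col).restrictScalars ℂ) : ℤ) *
        ((∏ i, (betaNumber μ i)! : ℕ) : ℤ) =
      N ! * ∏ i, ∏ j ∈ Ioi i, ((betaNumber μ i : ℤ) - betaNumber μ j) := by
  have hcol (x : Fin N) : col x < m := ((h.2 _ _).1 ⟨x, rfl, rfl⟩).trans_le (hf (row x))
  have colTableau : IsColTableau μ row fun x => ⟨col x, hcol x⟩ :=
    ⟨fun x y hrow hcol => h.1 (Prod.ext hrow (congrArg Fin.val hcol)), fun r i => by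
      rw [← hμ, ← h.2 r i]
      simp only [Fin.ext_iff]⟩
  have antitone : Antitone μ := fun i j hij => le_of_forall_lt fun r hr =>
    (hμ r i).1 ((Fin.le_def.1 hij).trans_lt ((hμ r j).2 hr))
  rw [finrank_spechtIdeal colTableau, finrank_polytabloidSpan antitone colTableau.sum_eq,
    ← betaDet_eq_prod]
  exact numStandard_mul_prod_factorial antitone colTableau.sum_eq

lemma finrank_spechtIdeal_of_three_columns {N a b c : ℕ} {f : ℕ → ℕ} {row col : Fin N → ℕ}
    (h : IsTableau f row col)
    (hf : ∀ r, f r = if r < c then 3 else if r < b then 2 else if r < a then 1 else 0)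
    (hcb : c ≤ b) (hba : b ≤ a) :
    (finrank ℂ ((SpechtIdeal row col).restrictScalars ℂ) : ℤ) * ((a + 2)! * (b + 1)! * c !) =
      N ! * ((a - b + 1) * (a - c + 2) * (b - c + 1)) := by
  have formula := finrank_spechtIdeal_mul_prod_factorial (μ := ![a, b, c]) h
    (fun r => by rw [hf]; split_ifs <;> omega)
    (fun r i => by rw [hf]; fin_cases i <;> simp <;> split_ifs <;> omega)
  have betaNumbers : betaNumber ![a, b, c] = ![a + 2, b + 1, c] := by
    ext i
    fin_cases i <;> rfl
  have Ioi_eq : Ioi (0 : Fin 3) = {1, 2} ∧ Ioi (1 : Fin 3) = {2} ∧ Ioi (2 : Fin 3) = ∅ := by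
    decide
  simp only [betaNumbers, Fin.prod_univ_three, Ioi_eq] at formula
  simp only [Matrix.cons_val, mem_singleton, Fin.reduceEq, not_false_eq_true, prod_insert,
    prod_singleton, prod_empty, mul_one] at formula
  push_cast at formula
  linear_combination formula

lemma finrank_spechtIdeal_shapeA {N : ℕ} (n : ℕ) {row col : Fin N → ℕ}
    (h : IsTableau (shapeA (n + 2)) row col) :
    (finrank ℂ ((SpechtIdeal row col).restrictScalars ℂ) : ℤ) *
        ((n + 4)! * (n + 2)! * (n + 1)!) = 6 * N ! := by
  have formula := finrank_spechtIdeal_of_three_columns (a := n + 2) (b := n + 1) (c := n + 1) h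
    (fun r => by unfold shapeA; split_ifs <;> omega) (by omega) (by omega)
  push_cast at formula
  linear_combination formula

lemma finrank_spechtIdeal_shapeB {N : ℕ} (n : ℕ) {row col : Fin N → ℕ}
    (h : IsTableau (shapeB (n + 2)) row col) :
    (finrank ℂ ((SpechtIdeal row col).restrictScalars ℂ) : ℤ) *
        ((n + 5)! * (n + 2)! * n !) = 30 * N ! := by
  have formula := finrank_spechtIdeal_of_three_columns (a := n + 3) (b := n + 1) (c := n) h
    (fun r => by unfold shapeB; split_ifs <;> omega) (by omega) (by omega)
  push_cast at formula
  linear_combination formula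

end DimensionFormula

/-- for all `n ≥ 2`, the dimension of the `S_{3n−2}`-module
`S^{3^{n−1}1} ⊕ S^{3^{n−2}21²}` equals `(4 / ((n+1)(n+2)(n+3))) · (3n)! / (n!)³`
(stated with denominators cleared). -/
theorem stmt12 (n : ℕ) (hn : 2 ≤ n)
    (rowa cola rowb colb : Fin (3 * n - 2) → ℕ)
    (ha : IsTableau (shapeA n) rowa cola) (hb : IsTableau (shapeB n) rowb colb) :
    (Module.finrank ℂ ↥((SpechtIdeal rowa cola).restrictScalars ℂ) +
        Module.finrank ℂ ↥((SpechtIdeal rowb colb).restrictScalars ℂ)) *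
      ((n + 1) * (n + 2) * (n + 3)) * (Nat.factorial n) ^ 3 =
    4 * Nat.factorial (3 * n) := by
  obtain ⟨m, rfl⟩ : ∃ m, n = m + 2 := ⟨n - 2, by omega⟩
  have dimA := finrank_spechtIdeal_shapeA m ha
  have dimB := finrank_spechtIdeal_shapeB m hb
  have factorial_step : (Nat.factorial (3 * (m + 2)) : ℤ) =
      (3 * m + 6) * (3 * m + 5) * Nat.factorial (3 * (m + 2) - 2) := by
    rw [show 3 * (m + 2) = 3 * (m + 2) - 2 + 1 + 1 by omega, Nat.factorial_succ, Nat.factorial_succ]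
    push_cast [show 3 * (m + 2) - 2 = 3 * m + 4 by omega]
    ring
  zify
  rw [factorial_step]
  push_cast [Nat.factorial_succ] at dimA dimB ⊢
  linear_combination (m + 2) * (m + 5) * dimA + (m + 2) * (m + 1) * dimB
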